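/- Let n ≥ 1, let λ : Fin n → ℂ lie in the Poincaré domain, and let ξ be in Poincaré–Dulac normal form for λ. Suppose a ∈ ℂ and X : (Fin n → ℂ) → (Fin n → ℂ) is entire, and that a·ξ(z) = DX(z)(ξ(z)) − Dξ(z)(X(z)) for every z ∈ ℂⁿ (i.e., a·ξ = [ξ,X] = L_ξ(X)). Then a = 0. In other words, the line ℂ·ξ meets the image of the Lie derivative L_ξ on entire vector fields only in 0. -/

import Mathlib

open scoped BigOperators

/-!
At a zero `p` of `V` and `W` the Lie bracket linearizes to the commutator of the derivatives, so
`a • V = [V, W]` near `p` gives `a • A = B * A - A * B` with `A = DV(p)` and `B = DW(p)`. Then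
`(k * a) • A ^ k = B * A ^ k - A ^ k * B` for every `k`, and taking norms yields
`k * ‖a‖ ≤ 2 * ‖B‖` unless `A` is nilpotent. Here `W p = 0` is automatic when `A` is injective, and
the linear part of a Poincaré–Dulac normal form is injective, being triangular with the nonzero
diagonal entries `λ j`.
-/

open Filter Metric Set Topology

section Commutator

variable {𝕜 R : Type*}

lemma lie_pow_of_lie_eq_smul [CommRing 𝕜] [Ring R] [Algebra 𝕜 R] {a b : R} {c : 𝕜}
    (h : ⁅b, a⁆ = c • a) (k : ℕ) : ⁅b, a ^ k⁆ = (k * c) • a ^ k := by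
  induction k with
  | zero => simp [Ring.lie_def]
  | succ k ih =>
    calc ⁅b, a ^ (k + 1)⁆ = ⁅b, a ^ k⁆ * a + a ^ k * ⁅b, a⁆ := by
          simp only [Ring.lie_def, pow_succ]
          noncomm_ring
      _ = ((k + 1 : ℕ) * c) • a ^ (k + 1) := by
          rw [ih, h, smul_mul_assoc, mul_smul_comm, ← pow_succ, ← add_smul]
          push_cast
          ring_nf

lemma norm_lie_le [SeminormedRing R] (a b : R) : ‖⁅a, b⁆‖ ≤ 2 * ‖a‖ * ‖b‖ := by
  calc ‖⁅a, b⁆‖ ≤ ‖a * b‖ + ‖b * a‖ := norm_sub_le _ _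
    _ ≤ ‖a‖ * ‖b‖ + ‖b‖ * ‖a‖ := add_le_add (norm_mul_le _ _) (norm_mul_le _ _)
    _ = 2 * ‖a‖ * ‖b‖ := by ring

theorem eq_zero_of_lie_eq_smul_of_not_isNilpotent [RCLike 𝕜] [NormedRing R] [NormedAlgebra 𝕜 R]
    {a b : R} {c : 𝕜} (h : ⁅b, a⁆ = c • a) (ha : ¬IsNilpotent a) : c = 0 := by
  have bound (k : ℕ) : k * ‖c‖ ≤ 2 * ‖b‖ := by
    have hk : 0 < ‖a ^ k‖ := norm_pos_iff.2 fun hk ↦ ha ⟨k, hk⟩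
    have := norm_lie_le b (a ^ k)
    rw [lie_pow_of_lie_eq_smul h, norm_smul, norm_mul, RCLike.norm_natCast] at this
    exact le_of_mul_le_mul_right this hk
  by_contra hc
  obtain ⟨k, hk⟩ := exists_nat_gt (2 * ‖b‖ / ‖c‖)
  exact ((div_lt_iff₀ (norm_pos_iff.2 hc)).1 hk).not_ge (bound k)

lemma not_isNilpotent_of_injective {E : Type*} [Semiring 𝕜] [AddCommMonoid E] [TopologicalSpace E]
    [Module 𝕜 E] [Nontrivial E] {A : E →L[𝕜] E} (hA : Function.Injective A) :
    ¬IsNilpotent A := by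
  rintro ⟨k, hk⟩
  obtain ⟨v, hv⟩ := exists_ne (0 : E)
  have hAk : Function.Injective (A ^ k) := by
    simpa only [FunLike.coe_pow_eq_iterate] using hA.iterate k
  exact hv (hAk (by simp [hk]))

end Commutator

section Linearization

variable {𝕜 E F G : Type*} [NormedAddCommGroup E] [NormedAddCommGroup F] [NormedAddCommGroup G]

/- Unlike in the product rule for `fun z ↦ A z (g z)`, the factor `A` need not be differentiable,
because `g` vanishes at the base point. -/
lemma hasFDerivAt_clm_apply_of_eq_zero [NontriviallyNormedField 𝕜] [NormedSpace 𝕜 E]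
    [NormedSpace 𝕜 F] [NormedSpace 𝕜 G] {A : E → F →L[𝕜] G} {g : E → F} {g' : E →L[𝕜] F} {p : E}
    (hA : ContinuousAt A p) (hg : HasFDerivAt g g' p) (hgp : g p = 0) :
    HasFDerivAt (fun z ↦ A z (g z)) (A p ∘L g') p := by
  have hA' : (fun z ↦ A z - A p) =o[𝓝 p] fun _ ↦ (1 : ℝ) :=
    (Asymptotics.isLittleO_one_iff ℝ).2 (tendsto_sub_nhds_zero_iff.2 hA)
  have hg' : g =O[𝓝 p] fun z ↦ z - p := by simpa [hgp] using hg.isBigO_sub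
  have remainder : HasFDerivAt (fun z ↦ (A z - A p) (g z)) (0 : E →L[𝕜] G) p := by
    refine .of_isLittleO ?_
    have : (fun z ↦ (A z - A p) (g z)) =O[𝓝 p] fun z ↦ ‖A z - A p‖ * ‖g z‖ :=
      .of_norm_le fun z ↦ (A z - A p).le_opNorm (g z)
    simpa [hgp] using this.trans_isLittleO (hA'.norm_left.mul_isBigO hg'.norm_norm)
  simpa [Function.comp_def, Pi.add_def] using ((A p).hasFDerivAt.comp p hg).add remainder

lemma hasFDerivAt_lieBracket_of_eq_zero [NontriviallyNormedField 𝕜] [NormedSpace 𝕜 E]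
    {V W : E → E} {p : E} (hV : DifferentiableAt 𝕜 V p) (hW : DifferentiableAt 𝕜 W p)
    (hV' : ContinuousAt (fderiv 𝕜 V) p) (hW' : ContinuousAt (fderiv 𝕜 W) p)
    (hVp : V p = 0) (hWp : W p = 0) :
    HasFDerivAt (VectorField.lieBracket 𝕜 V W) ⁅fderiv 𝕜 W p, fderiv 𝕜 V p⁆ p :=
  (hasFDerivAt_clm_apply_of_eq_zero hW' hV.hasFDerivAt hVp).sub
    (hasFDerivAt_clm_apply_of_eq_zero hV' hW.hasFDerivAt hWp)

theorem eq_zero_of_eventually_smul_eq_lieBracket [RCLike 𝕜] [NormedSpace 𝕜 E] [Nontrivial E]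
    {V W : E → E} {p : E} {a : 𝕜} (hV : DifferentiableAt 𝕜 V p) (hW : DifferentiableAt 𝕜 W p)
    (hV' : ContinuousAt (fderiv 𝕜 V) p) (hW' : ContinuousAt (fderiv 𝕜 W) p)
    (hVp : V p = 0) (hinj : Function.Injective (fderiv 𝕜 V p))
    (h : ∀ᶠ z in 𝓝 p, a • V z = VectorField.lieBracket 𝕜 V W z) : a = 0 := by
  have hWp : W p = 0 := by
    refine hinj ?_
    simpa [VectorField.lieBracket, hVp, eq_comm] using h.self_of_nhds
  have hlie : ⁅fderiv 𝕜 W p, fderiv 𝕜 V p⁆ = a • fderiv 𝕜 V p :=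
    ((hasFDerivAt_lieBracket_of_eq_zero hV hW hV' hW' hVp hWp).congr_of_eventuallyEq h).unique
      (hV.hasFDerivAt.const_smul a)
  exact eq_zero_of_lie_eq_smul_of_not_isNilpotent hlie (not_isNilpotent_of_injective hinj)

end Linearization

lemma mapsTo_closedBall_two_mul_of_mapsTo_closedBall {α β : Type*} [PseudoMetricSpace β]
    {f : α → β} {s : Set α} {x : α} {c : β} {M : ℝ} (hM : MapsTo f s (closedBall c M))
    (hx : x ∈ s) : MapsTo f s (closedBall (f x) (2 * M)) :=
  hM.mono_right (closedBall_subset_closedBall' (by linarith [mem_closedBall'.1 (hM hx)]))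

section Holomorphic

variable {E F : Type*} [NormedAddCommGroup E] [NormedSpace ℂ E] [NormedAddCommGroup F]
  [NormedSpace ℂ F] {f : E → F} {p : E} {c : F} {r M : ℝ}

lemma dist_le_two_mul_div_mul_dist_of_mapsTo_ball (hd : DifferentiableOn ℂ f (ball p r))
    (hM : MapsTo f (ball p r) (closedBall c M)) {z : E} (hz : z ∈ ball p r) :
    dist (f z) (f p) ≤ 2 * M / r * dist z p :=
  have hr : 0 < r := nonempty_ball.1 ⟨z, hz⟩
  Complex.dist_le_div_mul_dist_of_mapsTo_ball hd
    (mapsTo_closedBall_two_mul_of_mapsTo_closedBall hM (mem_ball_self hr)) hz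

lemma norm_fderiv_le_two_mul_div_of_mapsTo_ball (hd : DifferentiableOn ℂ f (ball p r))
    (hM : MapsTo f (ball p r) (closedBall c M)) (hr : 0 < r) : ‖fderiv ℂ f p‖ ≤ 2 * M / r :=
  Complex.norm_fderiv_le_div_of_mapsTo_ball hd
    (mapsTo_closedBall_two_mul_of_mapsTo_closedBall hM (mem_ball_self hr)) hr

/- The derivative at `z` minus the one at `p` is the derivative at `p` of the increment
`w ↦ f (w + (z - p)) - f w`. The Schwarz lemma bounds the increment by `M / r * ‖z - p‖`, and then
bounds its derivative. -/
lemma dist_fderiv_le_of_mapsTo_ball (hd : DifferentiableOn ℂ f (ball p (3 * r)))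
    (hM : MapsTo f (ball p (3 * r)) (closedBall c M)) {z : E} (hz : z ∈ ball p r) :
    dist (fderiv ℂ f z) (fderiv ℂ f p) ≤ 2 * (M / r * dist z p) / r := by
  have hr : 0 < r := nonempty_ball.1 ⟨z, hz⟩
  have hzp : ‖z - p‖ < r := mem_ball_iff_norm.1 hz
  have hshift {w : E} : w + (z - p) ∈ ball w (2 * r) := by
    rw [mem_ball_iff_norm, add_sub_cancel_left]
    linarith
  have hsub {w : E} (hw : w ∈ ball p r) : ball w (2 * r) ⊆ ball p (3 * r) :=
    ball_subset_ball' (by linarith [mem_ball.1 hw])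
  have hf' {w x : E} (hw : w ∈ ball p r) (hx : x ∈ ball w (2 * r)) :
      HasFDerivAt f (fderiv ℂ f x) x :=
    (hd.differentiableAt (isOpen_ball.mem_nhds (hsub hw hx))).hasFDerivAt
  let g : E → F := fun w ↦ f (w + (z - p)) - f w
  have hg {w : E} (hw : w ∈ ball p r) :
      HasFDerivAt g (fderiv ℂ f (w + (z - p)) - fderiv ℂ f w) w :=
    ((hasFDerivAt_comp_add_right _).2 (hf' hw hshift)).sub
      (hf' hw (mem_ball_self (by linarith)))
  have hg_maps : MapsTo g (ball p r) (closedBall 0 (M / r * dist z p)) := by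
    intro w hw
    rw [mem_closedBall_zero_iff]
    calc ‖g w‖ = dist (f (w + (z - p))) (f w) := (dist_eq_norm _ _).symm
      _ ≤ 2 * M / (2 * r) * dist (w + (z - p)) w :=
        dist_le_two_mul_div_mul_dist_of_mapsTo_ball (hd.mono (hsub hw))
          (hM.mono_left (hsub hw)) hshift
      _ = M / r * dist z p := by
        rw [mul_div_mul_left _ _ two_ne_zero, dist_self_add_left, dist_eq_norm z]
  have hgp : fderiv ℂ g p = fderiv ℂ f z - fderiv ℂ f p := by
    simpa only [add_sub_cancel] using (hg (mem_ball_self hr)).fderiv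
  rw [dist_eq_norm, ← hgp]
  exact norm_fderiv_le_two_mul_div_of_mapsTo_ball
    (fun w hw ↦ (hg hw).differentiableAt.differentiableWithinAt) hg_maps hr

theorem continuousAt_fderiv_of_eventually_differentiableAt
    (hf : ∀ᶠ z in 𝓝 p, DifferentiableAt ℂ f z) : ContinuousAt (fderiv ℂ f) p := by
  obtain ⟨R, hR, hball⟩ := Metric.eventually_nhds_iff_ball.1
    (hf.and (hf.self_of_nhds.continuousAt.eventually (closedBall_mem_nhds (f p) one_pos)))
  obtain ⟨r, rfl⟩ : ∃ r, R = 3 * r := ⟨R / 3, by ring⟩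
  have hr : 0 < r := by linarith
  refine continuousAt_of_locally_lipschitz hr (2 * (1 / r) / r) fun z hz ↦ ?_
  calc dist (fderiv ℂ f z) (fderiv ℂ f p) ≤ 2 * (1 / r * dist z p) / r :=
        dist_fderiv_le_of_mapsTo_ball (fun w hw ↦ (hball w hw).1.differentiableWithinAt)
          (fun w hw ↦ (hball w hw).2) hz
    _ = 2 * (1 / r) / r * dist z p := by ring

theorem stmt_11_general [Nontrivial E] {V W : E → E} {a : ℂ}
    (hV : ∀ᶠ z in 𝓝 p, DifferentiableAt ℂ V z) (hW : ∀ᶠ z in 𝓝 p, DifferentiableAt ℂ W z)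
    (hVp : V p = 0) (hinj : Function.Injective (fderiv ℂ V p))
    (h : ∀ᶠ z in 𝓝 p, a • V z = VectorField.lieBracket ℂ V W z) : a = 0 :=
  eq_zero_of_eventually_smul_eq_lieBracket hV.self_of_nhds hW.self_of_nhds
    (continuousAt_fderiv_of_eventually_differentiableAt hV)
    (continuousAt_fderiv_of_eventually_differentiableAt hW) hVp hinj h

end Holomorphic

section Triangular

variable {ι 𝕜 : Type*}

/-- A self-map `f` of `ι → 𝕜` is triangular with diagonal `l` if each component `f · j`, restricted
to the coordinate subspace where all `z k` with `k < j` vanish, is the linear form `l j * z j`.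
Poincaré–Dulac normal forms and their linear parts both have this property. -/
def IsTriangularWithDiag [LT ι] [MulZeroClass 𝕜] (l : ι → 𝕜) (f : (ι → 𝕜) → ι → 𝕜) : Prop :=
  ∀ z j, (∀ k < j, z k = 0) → f z j = l j * z j

namespace IsTriangularWithDiag

lemma map_zero [LT ι] [MulZeroClass 𝕜] {l : ι → 𝕜} {f : (ι → 𝕜) → ι → 𝕜}
    (hf : IsTriangularWithDiag l f) : f 0 = 0 := by
  ext j
  simp [hf 0 j]

lemma injective [Preorder ι] [WellFoundedLT ι] [Ring 𝕜] [NoZeroDivisors 𝕜] {l : ι → 𝕜}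
    {A : (ι → 𝕜) →ₗ[𝕜] ι → 𝕜} (hA : IsTriangularWithDiag l A) (hl : ∀ j, l j ≠ 0) :
    Function.Injective A := by
  refine (injective_iff_map_eq_zero A).2 fun v hv ↦ funext fun j ↦ ?_
  induction j using WellFoundedLT.induction with
  | ind j ih =>
    have hj : l j * v j = 0 := by simpa [hv] using (hA v j ih).symm
    exact (mul_eq_zero.1 hj).resolve_left (hl j)

lemma fderiv_zero [LT ι] [Finite ι] [NontriviallyNormedField 𝕜] {l : ι → 𝕜}
    {f : (ι → 𝕜) → ι → 𝕜} (hf : IsTriangularWithDiag l f) (hd : DifferentiableAt 𝕜 f 0) :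
    IsTriangularWithDiag l (fderiv 𝕜 f 0) := by
  cases nonempty_fintype ι
  intro v j hv
  have hline : (fun t : 𝕜 ↦ f (t • v) j) = fun t ↦ t * (l j * v j) := by
    ext t
    rw [hf (t • v) j fun k hk ↦ by simp [hv k hk], Pi.smul_apply, smul_eq_mul, mul_left_comm]
  have hderiv : HasDerivAt (fun t : 𝕜 ↦ f (t • v) j) (fderiv 𝕜 f 0 v j) 0 := by
    simpa [HasLineDerivAt] using hasDerivAt_pi.1 (hd.hasFDerivAt.hasLineDerivAt v) j
  rw [hline] at hderiv
  exact hderiv.unique (hasDerivAt_mul_const _)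

lemma injective_fderiv_zero [Preorder ι] [WellFoundedLT ι] [Finite ι] [NontriviallyNormedField 𝕜]
    {l : ι → 𝕜} {f : (ι → 𝕜) → ι → 𝕜} (hf : IsTriangularWithDiag l f)
    (hd : DifferentiableAt 𝕜 f 0) (hl : ∀ j, l j ≠ 0) : Function.Injective (fderiv 𝕜 f 0) :=
  (hf.fderiv_zero hd).injective hl

end IsTriangularWithDiag

end Triangular

lemma exists_lt_ne_zero_of_ne_zero {ι : Type*} [LinearOrder ι] {m : ι → ℕ} {j : ι} (hm : m ≠ 0)
    (h : ∀ k, j ≤ k → m k = 0) : ∃ k < j, m k ≠ 0 := by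
  obtain ⟨k, hk⟩ := Function.ne_iff.1 hm
  exact ⟨k, lt_of_not_ge fun hjk ↦ hk (h k hjk), hk⟩

lemma ne_zero_of_two_le_sum_or_eq_ite {ι : Type*} [Fintype ι] [DecidableEq ι] {m : ι → ℕ}
    (h : 2 ≤ ∑ k, m k ∨ ∃ i, m = fun k ↦ if k = i then 1 else 0) : m ≠ 0 := by
  rintro rfl
  rcases h with h | ⟨i, hi⟩
  · simp at h
  · simpa using congrFun hi i

section NormalForm

variable {ι 𝕜 : Type*} [Fintype ι] [DecidableEq ι] {l : ι → 𝕜} {R : Finset (ι × (ι → ℕ))}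
  {a : ι × (ι → ℕ) → 𝕜} {ξ : (ι → 𝕜) → ι → 𝕜}

lemma isTriangularWithDiag_of_eq_add_sum [LT ι] [CommSemiring 𝕜]
    (hR : ∀ p ∈ R, ∃ k < p.1, p.2 k ≠ 0)
    (hξ : ∀ z j, ξ z j = l j * z j + ∑ p ∈ R with p.1 = j, a p * ∏ k, z k ^ p.2 k) :
    IsTriangularWithDiag l ξ := by
  intro z j hz
  rw [hξ, Finset.sum_eq_zero, add_zero]
  simp only [Finset.mem_filter]
  rintro p ⟨hp, rfl⟩
  obtain ⟨k, hk, hpk⟩ := hR p hp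
  rw [Finset.prod_eq_zero (Finset.mem_univ k) (by rw [hz k hk, zero_pow hpk]), mul_zero]

lemma differentiable_of_eq_add_sum [NontriviallyNormedField 𝕜]
    (hξ : ∀ z j, ξ z j = l j * z j + ∑ p ∈ R with p.1 = j, a p * ∏ k, z k ^ p.2 k) :
    Differentiable 𝕜 ξ := by
  refine differentiable_pi.2 fun j ↦ ?_
  simp only [hξ]
  fun_prop

end NormalForm

/-- If `ξ` is in Poincaré–Dulac normal form for `λ` in the Poincaré domain,
`X` is an entire vector field and `a • ξ = [ξ, X]`, then `a = 0`. -/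
theorem stmt_11 (n : ℕ) (hn : 1 ≤ n) (l : Fin n → ℂ)
    (hP : (0 : ℂ) ∉ convexHull ℝ (Set.range l))
    (R : Finset (Fin n × (Fin n → ℕ))) (a : Fin n × (Fin n → ℕ) → ℂ)
    (hR : ∀ p ∈ R, 1 ≤ (p.1 : ℕ) ∧ l p.1 = ∑ k, (p.2 k : ℂ) * l k ∧
      (∀ k, p.1 ≤ k → p.2 k = 0) ∧
      (2 ≤ ∑ k, p.2 k ∨ ∃ i : Fin n, (i : ℕ) + 1 = (p.1 : ℕ) ∧
        p.2 = fun k => if k = i then 1 else 0))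
    (ξ : (Fin n → ℂ) → (Fin n → ℂ))
    (hξ : ∀ z j, ξ z j = l j * z j +
      ∑ p ∈ R.filter (fun p => p.1 = j), a p * ∏ k, z k ^ p.2 k)
    (a0 : ℂ) (X : (Fin n → ℂ) → (Fin n → ℂ)) (hX : Differentiable ℂ X)
    (hcomm : ∀ z, a0 • ξ z = fderiv ℂ X z (ξ z) - fderiv ℂ ξ z (X z)) :
    a0 = 0 := by
  have : Nonempty (Fin n) := ⟨⟨0, hn⟩⟩
  have hl (j) : l j ≠ 0 := fun hj ↦ hP (hj ▸ subset_convexHull ℝ _ (mem_range_self j))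
  have hm : ∀ p ∈ R, ∃ k < p.1, p.2 k ≠ 0 := fun p hp ↦
    have ⟨_, _, hlower, hdeg⟩ := hR p hp
    exists_lt_ne_zero_of_ne_zero
      (ne_zero_of_two_le_sum_or_eq_ite (hdeg.imp_right fun ⟨i, _, hi⟩ ↦ ⟨i, hi⟩)) hlower
  have htri : IsTriangularWithDiag l ξ := isTriangularWithDiag_of_eq_add_sum hm hξ
  have hdiff : Differentiable ℂ ξ := differentiable_of_eq_add_sum hξ
  exact stmt_11_general (.of_forall hdiff) (.of_forall hX) htri.map_zero
    (htri.injective_fderiv_zero (hdiff 0) hl) (.of_forall hcomm)
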